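/- arXiv:1306.0371 — 4 statements merged into one kernel-verified Lean document; each statement's English description precedes it below -/
import Mathlib

section
/- Let X be a compact metric space, for each t ≥ 0 let β_t be a Borel probability measure on X and δ_t : X → 𝒫(X) a measurable map, and let Γ be a nonempty closed convex subset of 𝒫(X). Suppose that for every open neighborhood U of Γ in 𝒫(X) one has ν_t(U) → 1 as t → +∞. Then every weak limit of the measures μ_t (i.e., every limit in 𝒫(X) of a sequence μ_{t_n} with t_n → +∞) belongs to Γ. -/
open MeasureTheory Filter Topology ENNReal NNReal

/-- A subset `Γ` of the space of (Borel) probability measures is convex: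
it is closed under forming convex combinations `a • μ + (1 - a) • ν`. -/
def ConvexPMSet {X : Type*} [MeasurableSpace X]
    (Γ : Set (ProbabilityMeasure X)) : Prop :=
  ∀ μ ν : ProbabilityMeasure X, μ ∈ Γ → ν ∈ Γ →
    ∀ a : NNReal, a ≤ 1 → ∀ σ : ProbabilityMeasure X,
      (σ : Measure X) = (a : ℝ≥0∞) • (μ : Measure X) + ((1 - a : NNReal) : ℝ≥0∞) • (ν : Measure X) →
      σ ∈ Γ

/-!
If a weak limit `μlim` were outside `Γ`, then Hahn–Banach in the weak topology of measures would
give a continuous `f ≥ 0` and a number `u` with `∫ f dμlim < u < ∫ f dγ` for all `γ ∈ Γ`. The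
half-space `{γ | u < ∫ f dγ}` is an open neighborhood of `Γ`, so it asymptotically carries all the
mass of the laws `ν t`. Since `∫ f dμ t` is the mean of `γ ↦ ∫ f dγ` under `ν t`, Markov's
inequality forces `∫ f dμlim ≥ u`, a contradiction.
-/

open scoped BoundedContinuousFunction

section Separation

variable {X : Type*} [TopologicalSpace X] [MeasurableSpace X] [OpensMeasurableSpace X]

/-- Integration of bounded continuous functions against a finite measure, as a point of the
algebraic dual of `X →ᵇ ℝ` with its weak-* topology. In this locally convex space, unlike in
`ProbabilityMeasure X`, Hahn–Banach separation is available. -/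
noncomputable def integralFunctional (m : Measure X) [IsFiniteMeasure m] :
    WeakBilin (LinearMap.id : Module.Dual ℝ (X →ᵇ ℝ) →ₗ[ℝ] Module.Dual ℝ (X →ᵇ ℝ)) :=
  ({ toFun := fun f => ∫ x, f x ∂m
     map_add' := fun f g => integral_add (f.integrable m) (g.integrable m)
     map_smul' := fun c f => integral_const_mul c f } : Module.Dual ℝ (X →ᵇ ℝ))

theorem isInducing_integralFunctional :
    IsInducing fun p : ProbabilityMeasure X => integralFunctional (p : Measure X) := by
  refine isInducing_iff_nhds.2 fun p => ?_
  refine le_antisymm (Tendsto.le_comap ?_) (tendsto_id'.1 ?_)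
  · exact (WeakBilin.tendsto_iff_forall_eval_tendsto _ Function.injective_id).2
      (ProbabilityMeasure.tendsto_iff_forall_integral_tendsto.1 tendsto_id)
  · exact ProbabilityMeasure.tendsto_iff_forall_integral_tendsto.2
      ((WeakBilin.tendsto_iff_forall_eval_tendsto _ Function.injective_id).1 tendsto_comap)

theorem integralFunctional_smul_add_smul (m m' : Measure X) [IsFiniteMeasure m]
    [IsFiniteMeasure m'] (a b : ℝ≥0) :
    integralFunctional (a • m + b • m') =
      (a : ℝ) • integralFunctional m + (b : ℝ) • integralFunctional m' := by
  refine LinearMap.ext fun f => ?_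
  change ∫ x, f x ∂(a • m + b • m') = (a : ℝ) * ∫ x, f x ∂m + (b : ℝ) * ∫ x, f x ∂m'
  rw [integral_add_measure (f.integrable _) (f.integrable _), integral_smul_nnreal_measure,
    integral_smul_nnreal_measure]
  rfl

theorem ConvexPMSet.convex_image_integralFunctional {Γ : Set (ProbabilityMeasure X)}
    (hΓ : ConvexPMSet Γ) :
    Convex ℝ ((fun p : ProbabilityMeasure X => integralFunctional (p : Measure X)) '' Γ) := by
  rintro _ ⟨p, hp, rfl⟩ _ ⟨q, hq, rfl⟩ a b ha hb hab
  lift a to ℝ≥0 using ha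
  lift b to ℝ≥0 using hb
  have hab : a + b = 1 := by exact_mod_cast hab
  have hprob : IsProbabilityMeasure (a • (p : Measure X) + b • (q : Measure X)) :=
    ⟨by simpa using mod_cast hab⟩
  refine ⟨⟨_, hprob⟩, hΓ p q hp hq a (hab ▸ le_self_add) _ ?_,
    integralFunctional_smul_add_smul _ _ a b⟩
  rw [← hab, add_tsub_cancel_left]
  rfl

theorem ConvexPMSet.exists_integral_lt_forall_lt_integral {Γ : Set (ProbabilityMeasure X)}
    (hΓ : ConvexPMSet Γ) (hΓcl : IsClosed Γ) {p : ProbabilityMeasure X} (hp : p ∉ Γ) :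
    ∃ (f : X →ᵇ ℝ) (u : ℝ), ∫ x, f x ∂(p : Measure X) < u ∧
      ∀ γ ∈ Γ, u < ∫ x, f x ∂(γ : Measure X) := by
  rw [← hΓcl.closure_eq, isInducing_integralFunctional.closure_eq_preimage_closure_image] at hp
  obtain ⟨φ, u, hpu, hΓu⟩ := geometric_hahn_banach_point_closed
    hΓ.convex_image_integralFunctional.closure isClosed_closure hp
  obtain ⟨f, rfl⟩ := LinearMap.dualEmbedding_surjective _ φ
  exact ⟨f, u, hpu, fun γ hγ => hΓu _ (subset_closure ⟨γ, hγ, rfl⟩)⟩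

theorem lintegral_nnrealPart_add_norm (f : X →ᵇ ℝ) (m : Measure X) [IsProbabilityMeasure m] :
    ∫⁻ x, (f + .const X ‖f‖).nnrealPart x ∂m = ENNReal.ofReal (∫ x, f x ∂m + ‖f‖) := by
  have hint : ∫ x, (f + .const X ‖f‖) x ∂m = ∫ x, f x ∂m + ‖f‖ := by
    rw [f.integral_add_const, probReal_univ, one_smul]
  rw [← hint, ofReal_integral_eq_lintegral_ofReal (BoundedContinuousFunction.integrable _ _)
    (ae_of_all _ f.add_norm_nonneg)]
  rfl

theorem ConvexPMSet.exists_lintegral_lt_forall_lt_lintegral {Γ : Set (ProbabilityMeasure X)}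
    (hΓ : ConvexPMSet Γ) (hΓcl : IsClosed Γ) {p : ProbabilityMeasure X} (hp : p ∉ Γ) :
    ∃ (f : X →ᵇ ℝ≥0) (u : ℝ≥0), ∫⁻ x, f x ∂(p : Measure X) < u ∧
      ∀ γ ∈ Γ, u < ∫⁻ x, f x ∂(γ : Measure X) := by
  obtain ⟨f, u, hpu, hΓu⟩ := hΓ.exists_integral_lt_forall_lt_integral hΓcl hp
  have hnonneg (q : ProbabilityMeasure X) : 0 ≤ ∫ x, f x ∂(q : Measure X) + ‖f‖ :=
    neg_le_iff_add_nonneg.1 (neg_le_of_abs_le (f.norm_integral_le_norm q))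
  refine ⟨(f + .const X ‖f‖).nnrealPart, (u + ‖f‖).toNNReal, ?_, fun γ hγ => ?_⟩
  · rw [lintegral_nnrealPart_add_norm]
    exact (ENNReal.ofReal_lt_ofReal_iff_of_nonneg (hnonneg p)).2 (by gcongr)
  · rw [lintegral_nnrealPart_add_norm]
    have := hnonneg p
    exact (ENNReal.ofReal_lt_ofReal_iff_of_nonneg (by linarith)).2 (by gcongr; exact hΓu γ hγ)

end Separation

section Markov

variable {Ω X : Type*} [MeasurableSpace Ω] [MeasurableSpace X]

theorem aemeasurable_of_bind_ne_zero {m : Measure Ω} {κ : Ω → Measure X} (h : m.bind κ ≠ 0) :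
    AEMeasurable κ m :=
  .of_map_ne_zero fun h0 => h (by rw [Measure.bind, h0, Measure.join_zero])

variable [TopologicalSpace X] [OpensMeasurableSpace X]
  [MeasurableSpace (ProbabilityMeasure X)] [OpensMeasurableSpace (ProbabilityMeasure X)]

theorem mul_map_lt_lintegral_le_lintegral_bind {m : Measure Ω} {κ : Ω → ProbabilityMeasure X}
    (hκ : AEMeasurable κ m) (hκ' : AEMeasurable (fun ω => (κ ω : Measure X)) m)
    (f : X →ᵇ ℝ≥0) (u : ℝ≥0∞) :
    u * m.map κ {γ | u < ∫⁻ x, f x ∂(γ : Measure X)} ≤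
      ∫⁻ x, f x ∂m.bind fun ω => (κ ω : Measure X) := by
  have hf : Measurable fun γ : ProbabilityMeasure X => ∫⁻ x, f x ∂(γ : Measure X) :=
    (ProbabilityMeasure.continuous_lintegral_boundedContinuousFunction f).measurable
  calc u * m.map κ {γ | u < ∫⁻ x, f x ∂(γ : Measure X)}
      ≤ u * m.map κ {γ | u ≤ ∫⁻ x, f x ∂(γ : Measure X)} := by
        gcongr with γ
        exact le_of_lt
    _ ≤ ∫⁻ γ, ∫⁻ x, f x ∂(γ : Measure X) ∂m.map κ := mul_meas_ge_le_lintegral hf u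
    _ = ∫⁻ ω, ∫⁻ x, f x ∂(κ ω : Measure X) ∂m := lintegral_map' hf.aemeasurable hκ
    _ = ∫⁻ x, f x ∂m.bind fun ω => (κ ω : Measure X) :=
        (Measure.lintegral_bind hκ'
          f.continuous.measurable.coe_nnreal_ennreal.aemeasurable).symm

end Markov

theorem weak_limits_in_Gamma_general
    {ι Ω X : Type*} [MeasurableSpace Ω]
    [TopologicalSpace X] [MeasurableSpace X] [OpensMeasurableSpace X]
    [MeasurableSpace (ProbabilityMeasure X)] [OpensMeasurableSpace (ProbabilityMeasure X)]
    {l : Filter ι} [l.NeBot]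
    (β : ι → Measure Ω)
    (δ : ι → Ω → ProbabilityMeasure X)
    (hδ : ∀ i, AEMeasurable (δ i) (β i))
    (μ : ι → ProbabilityMeasure X)
    (hμ : ∀ i, (μ i : Measure X) = (β i).bind (fun ω => (δ i ω : Measure X)))
    (Γ : Set (ProbabilityMeasure X)) (hΓcl : IsClosed Γ) (hΓconv : ConvexPMSet Γ)
    (hν : ∀ U : Set (ProbabilityMeasure X), IsOpen U → Γ ⊆ U →
      Tendsto (fun i => (β i).map (δ i) U) l (𝓝 1))
    (μlim : ProbabilityMeasure X) (hlim : Tendsto μ l (𝓝 μlim)) :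
    μlim ∈ Γ := by
  by_contra hμlim
  obtain ⟨f, u, hμlim_lt, hΓ_lt⟩ := hΓconv.exists_lintegral_lt_forall_lt_lintegral hΓcl hμlim
  have hf := ProbabilityMeasure.continuous_lintegral_boundedContinuousFunction f
  have hmass : Tendsto (fun i => u * (β i).map (δ i) {γ | u < ∫⁻ x, f x ∂(γ : Measure X)})
      l (𝓝 u) := by
    simpa using ENNReal.Tendsto.const_mul (hν _ (isOpen_lt continuous_const hf) hΓ_lt)
      (Or.inl one_ne_zero)
  have hmarkov (i : ι) : u * (β i).map (δ i) {γ | u < ∫⁻ x, f x ∂(γ : Measure X)} ≤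
      ∫⁻ x, f x ∂(μ i : Measure X) := by
    -- `Measure.bind` along a map that is not a.e.-measurable is `0`, which `μ i` is not.
    have hκ : AEMeasurable (fun ω => (δ i ω : Measure X)) (β i) :=
      aemeasurable_of_bind_ne_zero (hμ i ▸ IsProbabilityMeasure.ne_zero _)
    exact hμ i ▸ mul_map_lt_lintegral_le_lintegral_bind (hδ i) hκ f u
  exact hμlim_lt.not_ge (le_of_tendsto_of_tendsto' hmass ((hf.tendsto μlim).comp hlim) hmarkov)

/-- Let `X` be a compact metric space, `β t` Borel probability measures on
`X`, `δ t : X → 𝒫(X)` measurable maps, and `Γ ⊆ 𝒫(X)` nonempty, closed and convex.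
If for every open neighborhood `U` of `Γ` the laws `ν t := β t ∘ (δ t)⁻¹` satisfy
`ν t (U) → 1` as `t → ∞`, then every weak limit of the expectations
`μ t := ∫ δ t x dβ t (x)` along a sequence of times tending to `∞` belongs to `Γ`. -/
theorem weak_limits_in_Gamma
    {X : Type*} [MetricSpace X] [CompactSpace X] [MeasurableSpace X] [BorelSpace X]
    [MeasurableSpace (ProbabilityMeasure X)] [BorelSpace (ProbabilityMeasure X)]
    (β : ℝ → ProbabilityMeasure X)
    (δ : ℝ → X → ProbabilityMeasure X)
    (hδ : ∀ t : ℝ, 0 ≤ t → Measurable (δ t))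
    (μ : ℝ → ProbabilityMeasure X)
    (hμ : ∀ t : ℝ, 0 ≤ t →
      (μ t : Measure X) = (β t : Measure X).bind (fun x => (δ t x : Measure X)))
    (Γ : Set (ProbabilityMeasure X)) (hΓne : Γ.Nonempty) (hΓcl : IsClosed Γ)
    (hΓconv : ConvexPMSet Γ)
    (hν : ∀ U : Set (ProbabilityMeasure X), IsOpen U → Γ ⊆ U →
      Tendsto (fun t : ℝ => ((β t : Measure X).map (δ t)) U) atTop (𝓝 1))
    (tn : ℕ → ℝ) (htn0 : ∀ n, 0 ≤ tn n) (htn : Tendsto tn atTop atTop)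
    (μlim : ProbabilityMeasure X)
    (hlim : Tendsto (fun n => μ (tn n)) atTop (𝓝 μlim)) :
    μlim ∈ Γ :=
  weak_limits_in_Gamma_general (fun n => (β (tn n) : Measure X)) (fun n => δ (tn n))
    (fun n => (hδ _ (htn0 n)).aemeasurable) (fun n => μ (tn n)) (fun n => hμ _ (htn0 n))
    Γ hΓcl hΓconv (fun U hU hΓU => (hν U hU hΓU).comp htn) μlim hlim
end

section
/- Let X be a compact metric space, for each t ≥ 0 let β_t be a Borel probability measure on X and δ_t : X → 𝒫(X) a measurable map. Suppose there exists a lower semicontinuous convex functional J : 𝒫(X) → [0, +∞] with {J = 0} nonempty such that for every open neighborhood U of {J = 0} in 𝒫(X) one has limsup_{t→+∞} (1/t) log ν_t(𝒫(X)∖U) ≤ − inf { J(m) : m ∈ 𝒫(X)∖U }. Then every weak limit μ of the measures μ_t as t → +∞ satisfies J(μ) = 0. -/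
open MeasureTheory Filter Topology ENNReal NNReal

/-- A functional `J` on the space of probability measures is convex: it satisfies
`J (a • μ + (1 - a) • ν) ≤ a * J μ + (1 - a) * J ν`. -/
def ConvexPMFunctional {X : Type*} [MeasurableSpace X]
    (J : ProbabilityMeasure X → ℝ≥0∞) : Prop :=
  ∀ μ ν : ProbabilityMeasure X, ∀ a : NNReal, a ≤ 1 →
    ∀ σ : ProbabilityMeasure X,
      (σ : Measure X) = (a : ℝ≥0∞) • (μ : Measure X) + ((1 - a : NNReal) : ℝ≥0∞) • (ν : Measure X) →
      J σ ≤ (a : ℝ≥0∞) * J μ + ((1 - a : NNReal) : ℝ≥0∞) * J ν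

/-!
Let `ν t` be the law of `δ t`, so that `μ t` is the barycenter of `ν t`. Since `{J = 0}` is closed
and convex, Hahn–Banach separates any point `p` outside it by a half-space
`U = {m | ∫ g dm < c} ⊇ {J = 0}` with `c < ∫ g dp` and `g ≥ 0` bounded continuous. By compactness
`J` is bounded away from `0` on the complement of `U`, so the large deviations bound forces
`ν t Uᶜ → 0`, and `∫ g dμ t = ∫ (∫ g dm) dν t ≤ c + ‖g‖ * ν t Uᶜ` shows that `p` is not a weak
limit of `μ t`.
-/

open scoped BoundedContinuousFunction

section Separation

variable {X : Type*} [TopologicalSpace X] [MeasurableSpace X] [OpensMeasurableSpace X]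

/-- The algebraic dual of the bounded continuous functions with the topology of pointwise
convergence: a locally convex space all of whose continuous functionals are evaluations, so that
Hahn–Banach separates by integrals of bounded continuous functions. -/
abbrev WeakAlgebraicDual (X : Type*) [TopologicalSpace X] : Type _ :=
  WeakBilin (LinearMap.id : Module.Dual ℝ (X →ᵇ ℝ) →ₗ[ℝ] (X →ᵇ ℝ) →ₗ[ℝ] ℝ)

/-- Integration against `m`, as a point of the weak algebraic dual; this places the probability
measures in a locally convex space. -/
noncomputable def integralDual (m : ProbabilityMeasure X) : WeakAlgebraicDual X :=
  ({ toFun f := ∫ x, f x ∂(m : Measure X)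
     map_add' f g := integral_add (f.integrable _) (g.integrable _)
     map_smul' a f := integral_const_mul a f } : Module.Dual ℝ (X →ᵇ ℝ))

lemma isInducing_integralDual :
    IsInducing (integralDual : ProbabilityMeasure X → WeakAlgebraicDual X) := by
  have hcont : Continuous (integralDual : ProbabilityMeasure X → WeakAlgebraicDual X) :=
    WeakBilin.continuous_of_continuous_eval _ fun f =>
      ProbabilityMeasure.continuous_integral_boundedContinuousFunction f
  refine isInducing_iff_nhds.2 fun m => le_antisymm hcont.continuousAt.le_comap ?_
  refine tendsto_id'.1 <|
    ProbabilityMeasure.tendsto_iff_forall_integral_tendsto.2 fun f : X →ᵇ ℝ => ?_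
  exact ((WeakBilin.eval_continuous _ f).tendsto _).comp tendsto_comap

lemma convex_image_integralDual {K : Set (ProbabilityMeasure X)}
    (hK : Convex ℝ≥0 (((↑) : ProbabilityMeasure X → Measure X) '' K)) :
    Convex ℝ (integralDual '' K) := by
  rintro _ ⟨m, hm, rfl⟩ _ ⟨n, hn, rfl⟩ a b ha hb hab
  lift a to ℝ≥0 using ha
  lift b to ℝ≥0 using hb
  obtain ⟨σ, hσK, hσ⟩ := hK ⟨m, hm, rfl⟩ ⟨n, hn, rfl⟩ zero_le zero_le (by exact_mod_cast hab)
  refine ⟨σ, hσK, LinearMap.ext fun (f : X →ᵇ ℝ) => ?_⟩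
  change ∫ x, f x ∂(σ : Measure X)
    = a • ∫ x, f x ∂(m : Measure X) + b • ∫ x, f x ∂(n : Measure X)
  rw [hσ, integral_add_measure (f.integrable _) (f.integrable _), integral_smul_nnreal_measure,
    integral_smul_nnreal_measure]

theorem exists_integral_lt_of_notMem {K : Set (ProbabilityMeasure X)} (hKcl : IsClosed K)
    (hKconv : Convex ℝ≥0 (((↑) : ProbabilityMeasure X → Measure X) '' K))
    {p : ProbabilityMeasure X} (hp : p ∉ K) :
    ∃ (f : X →ᵇ ℝ) (c : ℝ), (∀ m ∈ K, ∫ x, f x ∂(m : Measure X) < c) ∧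
      c < ∫ x, f x ∂(p : Measure X) := by
  have hp' : integralDual p ∉ closure (integralDual '' K) := by
    rwa [← Set.mem_preimage, ← isInducing_integralDual.closure_eq_preimage_closure_image,
      hKcl.closure_eq]
  obtain ⟨L, c, hLK, hLp⟩ := geometric_hahn_banach_closed_point
    (convex_image_integralDual hKconv).closure isClosed_closure hp'
  obtain ⟨f, rfl⟩ := LinearMap.dualEmbedding_surjective _ L
  exact ⟨f, c, fun m hm => hLK _ (subset_closure ⟨m, hm, rfl⟩), hLp⟩

lemma lintegral_nnrealPart_add_const {m : Measure X} [IsProbabilityMeasure m] (f : X →ᵇ ℝ) {k : ℝ}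
    (hk : ‖f‖ ≤ k) :
    ∫⁻ x, (f + BoundedContinuousFunction.const X k).nnrealPart x ∂m
      = ENNReal.ofReal (∫ x, f x ∂m + k) := by
  have hnonneg : ∀ x, 0 ≤ (f + BoundedContinuousFunction.const X k) x := fun x => by
    have := (abs_le.1 (f.norm_coe_le_norm x)).1
    simp only [BoundedContinuousFunction.coe_add, Pi.add_apply,
      BoundedContinuousFunction.const_apply]
    linarith
  calc ∫⁻ x, (f + BoundedContinuousFunction.const X k).nnrealPart x ∂m
      = ENNReal.ofReal (∫ x, (f + BoundedContinuousFunction.const X k) x ∂m) :=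
        (ofReal_integral_eq_lintegral_ofReal (BoundedContinuousFunction.integrable _ _)
          (ae_of_all _ hnonneg)).symm
    _ = ENNReal.ofReal (∫ x, f x ∂m + k) := by
        rw [BoundedContinuousFunction.integral_add_const, probReal_univ, one_smul]

theorem exists_lintegral_lt_of_notMem {K : Set (ProbabilityMeasure X)} (hKcl : IsClosed K)
    (hKconv : Convex ℝ≥0 (((↑) : ProbabilityMeasure X → Measure X) '' K))
    {p : ProbabilityMeasure X} (hp : p ∉ K) :
    ∃ (g : X →ᵇ ℝ≥0) (c : ℝ≥0∞), (∀ m ∈ K, ∫⁻ x, g x ∂(m : Measure X) < c) ∧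
      c < ∫⁻ x, g x ∂(p : Measure X) := by
  obtain ⟨f, c, hfK, hfp⟩ := exists_integral_lt_of_notMem hKcl hKconv hp
  -- Adding `k ≥ 1 - c` keeps the threshold positive, so that `ENNReal.ofReal` does not truncate it.
  set k : ℝ := max ‖f‖ (1 - c)
  have hfk : ‖f‖ ≤ k := le_max_left _ _
  have hck : 1 - c ≤ k := le_max_right _ _
  refine ⟨(f + BoundedContinuousFunction.const X k).nnrealPart, ENNReal.ofReal (c + k),
    fun m hm => ?_, ?_⟩
  · rw [lintegral_nnrealPart_add_const f hfk, ENNReal.ofReal_lt_ofReal_iff (by linarith)]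
    linarith [hfK m hm]
  · rw [lintegral_nnrealPart_add_const f hfk, ENNReal.ofReal_lt_ofReal_iff (by linarith)]
    linarith

end Separation

section Barycenter

lemma bind_comp_eq_bind_map {α β γ : Type*} [MeasurableSpace α] [MeasurableSpace β]
    [MeasurableSpace γ] (m : Measure α) {f : α → β} (hf : Measurable f) {g : β → Measure γ}
    (hg : Measurable g) : m.bind (g ∘ f) = (m.map f).bind g := by
  rw [Measure.bind, Measure.bind, Measure.map_map hg hf]

lemma lintegral_le_mul_univ_add_mul_setOf_le {α : Type*} [MeasurableSpace α] (ν : Measure α)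
    {f : α → ℝ≥0∞} {M : ℝ≥0∞} (hf : ∀ x, f x ≤ M) (c : ℝ≥0∞) :
    ∫⁻ x, f x ∂ν ≤ c * ν Set.univ + M * ν {x | c ≤ f x} := by
  calc ∫⁻ x, f x ∂ν
      ≤ ∫⁻ x, (c + {x | c ≤ f x}.indicator (fun _ => M) x) ∂ν := by
        refine lintegral_mono fun x => ?_
        by_cases hx : c ≤ f x
        · simpa [hx] using le_add_left (hf x)
        · simpa [hx] using (not_le.1 hx).le
    _ = c * ν Set.univ + ∫⁻ x, {x | c ≤ f x}.indicator (fun _ => M) x ∂ν := by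
        rw [lintegral_add_left measurable_const, lintegral_const]
    _ ≤ c * ν Set.univ + M * ν {x | c ≤ f x} := by
        gcongr
        exact lintegral_indicator_const_le _ _

variable {X : Type*} [TopologicalSpace X] [HasOuterApproxClosed X] [MeasurableSpace X]
  [BorelSpace X] [MeasurableSpace (ProbabilityMeasure X)]
  [OpensMeasurableSpace (ProbabilityMeasure X)]

lemma measurable_toMeasure_of_opensMeasurableSpace :
    Measurable ((↑) : ProbabilityMeasure X → Measure X) := by
  refine Measurable.measure_of_isPiSystem_of_isProbabilityMeasure
    (BorelSpace.measurable_eq.trans borel_eq_generateFrom_isClosed) isPiSystem_isClosed ?_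
  intro F hF
  refine measurable_of_tendsto_metrizable
    (f := fun n (m : ProbabilityMeasure X) => ∫⁻ x, hF.apprSeq n x ∂(m : Measure X))
    (fun n => ?_) (tendsto_pi_nhds.2 fun m => ?_)
  · exact (ProbabilityMeasure.continuous_lintegral_boundedContinuousFunction _).measurable
  · exact HasOuterApproxClosed.tendsto_lintegral_apprSeq hF (m : Measure X)

lemma lintegral_bind_toMeasure_le (ν : ProbabilityMeasure (ProbabilityMeasure X)) (g : X →ᵇ ℝ≥0)
    (c : ℝ≥0∞) :
    ∫⁻ x, g x ∂((ν : Measure (ProbabilityMeasure X)).bind ProbabilityMeasure.toMeasure)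
      ≤ c + edist 0 g *
          (ν : Measure (ProbabilityMeasure X)) {m | c ≤ ∫⁻ x, g x ∂(m : Measure X)} := by
  have hg : ∀ m : ProbabilityMeasure X, ∫⁻ x, g x ∂(m : Measure X) ≤ edist 0 g := fun m => by
    simpa using g.lintegral_le_edist_mul (m : Measure X)
  rw [Measure.lintegral_bind measurable_toMeasure_of_opensMeasurableSpace.aemeasurable
    g.measurable_coe_ennreal_comp.aemeasurable]
  simpa using lintegral_le_mul_univ_add_mul_setOf_le (ν : Measure (ProbabilityMeasure X)) hg c

theorem mem_of_mapClusterPt_of_tendsto_measure_compl {ι : Type*} {l : Filter ι}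
    {K : Set (ProbabilityMeasure X)} (hKcl : IsClosed K)
    (hKconv : Convex ℝ≥0 (((↑) : ProbabilityMeasure X → Measure X) '' K))
    {ν : ι → ProbabilityMeasure (ProbabilityMeasure X)} {μ : ι → ProbabilityMeasure X}
    (hμ : ∀ i, (μ i : Measure X) = (ν i : Measure _).bind ProbabilityMeasure.toMeasure)
    (hν : ∀ U, IsOpen U → K ⊆ U → Tendsto (fun i => (ν i : Measure _) Uᶜ) l (𝓝 0))
    {p : ProbabilityMeasure X} (hp : MapClusterPt p l μ) : p ∈ K := by
  by_contra hpK
  obtain ⟨g, c, hgK, hgp⟩ := exists_lintegral_lt_of_notMem hKcl hKconv hpK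
  have hg : Continuous fun m : ProbabilityMeasure X => ∫⁻ x, g x ∂(m : Measure X) :=
    ProbabilityMeasure.continuous_lintegral_boundedContinuousFunction g
  have hmass : Tendsto
      (fun i => (ν i : Measure _) {m : ProbabilityMeasure X | c ≤ ∫⁻ x, g x ∂(m : Measure X)})
      l (𝓝 0) := by
    simpa only [Set.compl_ofPred, not_lt] using hν _ (isOpen_lt hg continuous_const) hgK
  have hbound : Tendsto (fun i => c + edist 0 g *
      (ν i : Measure _) {m : ProbabilityMeasure X | c ≤ ∫⁻ x, g x ∂(m : Measure X)})
      l (𝓝 c) := by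
    simpa using tendsto_const_nhds.add
      (ENNReal.Tendsto.const_mul hmass (Or.inr (edist_ne_top 0 g)))
  obtain ⟨c', hcc', hc'p⟩ := exists_between hgp
  have hbelow : ∀ᶠ i in l, ∫⁻ x, g x ∂(μ i : Measure X) < c' := by
    filter_upwards [hbound.eventually_lt_const hcc'] with i hi
    exact (hμ i ▸ lintegral_bind_toMeasure_le (ν i) g c).trans_lt hi
  have habove : ∃ᶠ i in l, c' < ∫⁻ x, g x ∂(μ i : Measure X) :=
    hp.frequently (hg.continuousAt.eventually_const_lt hc'p)
  obtain ⟨i, hi, hi'⟩ := (habove.and_eventually hbelow).exists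
  exact hi.not_gt hi'

end Barycenter

section LargeDeviations

lemma tendsto_zero_of_limsup_mul_log_neg {ι : Type*} {l : Filter ι} {s : ι → ℝ} {v : ι → ℝ≥0∞}
    (hs : Tendsto s l (𝓝[>] 0))
    (h : limsup (fun i => (s i : EReal) * ENNReal.log (v i)) l < 0) : Tendsto v l (𝓝 0) := by
  refine ENNReal.tendsto_nhds_zero.2 fun ε hε => ?_
  obtain ⟨e, he0, heε⟩ := ENNReal.lt_iff_exists_nnreal_btwn.1 hε
  have he0 : e ≠ 0 := by exact_mod_cast he0.ne'
  obtain ⟨r, hlimsup, hr⟩ := EReal.lt_iff_exists_real_btwn.1 h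
  have hlog : Tendsto (fun i => s i * Real.log e) l (𝓝 0) := by
    simpa using (tendsto_nhds_of_tendsto_nhdsWithin hs).mul_const (Real.log e)
  filter_upwards [eventually_lt_of_limsup_lt hlimsup,
    hlog.eventually_const_lt (EReal.coe_neg'.1 hr),
    hs.eventually eventually_mem_nhdsWithin] with i hvr hre hsi
  refine le_trans (le_of_not_gt fun hev => ?_) heε.le
  have hrr : (r : EReal) < r := calc
    (r : EReal) < (s i * Real.log e : ℝ) := EReal.coe_lt_coe_iff.2 hre
    _ = s i * ENNReal.log e := by rw [EReal.coe_mul, ENNReal.log_of_nnreal he0]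
    _ ≤ s i * ENNReal.log (v i) :=
        mul_le_mul_of_nonneg_left (ENNReal.log_le_log hev.le) (EReal.coe_nonneg.2 (le_of_lt hsi))
    _ < r := hvr
  exact hrr.false

lemma lt_biInf_of_isCompact_sublevel {α β : Type*} [TopologicalSpace α] [CompleteLinearOrder β]
    {f : α → β} (hf : LowerSemicontinuous f) {F : Set α} (hF : IsClosed F) {a b : β} (hab : a < b)
    (hb : IsCompact {x | f x ≤ b}) (h : ∀ x ∈ F, a < f x) : a < ⨅ x ∈ F, f x := by
  rcases ({x | f x ≤ b} ∩ F).eq_empty_or_nonempty with hempty | hne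
  · refine hab.trans_le (le_iInf₂ fun x hx => le_of_not_ge fun hxb => ?_)
    exact hempty.subset ⟨hxb, hx⟩
  · obtain ⟨y, ⟨hyb, hyF⟩, hy⟩ :=
      (hf.lowerSemicontinuousOn _).exists_isMinOn hne (hb.inter_right hF)
    refine (h y hyF).trans_le (le_iInf₂ fun x hx => ?_)
    rcases le_total (f x) b with hxb | hbx
    · exact hy ⟨hxb, hx⟩
    · exact hyb.trans hbx

lemma ConvexPMFunctional.convex_image_setOf_eq_zero {X : Type*} [MeasurableSpace X]
    {J : ProbabilityMeasure X → ℝ≥0∞} (hJ : ConvexPMFunctional J) :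
    Convex ℝ≥0 (((↑) : ProbabilityMeasure X → Measure X) '' {m | J m = 0}) := by
  rintro _ ⟨m, hm, rfl⟩ _ ⟨n, hn, rfl⟩ a b - - hab
  have hσ : IsProbabilityMeasure (a • (m : Measure X) + b • (n : Measure X)) := ⟨by
    simpa using mod_cast hab⟩
  obtain rfl : 1 - a = b := by rw [← hab, add_tsub_cancel_left]
  let σ : ProbabilityMeasure X := ⟨a • (m : Measure X) + (1 - a) • (n : Measure X), hσ⟩
  have hle : J σ ≤ a * J m + ↑(1 - a) * J n := hJ m n a (hab ▸ le_self_add) σ rfl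
  have hσ0 : J σ = 0 := by simpa [hm.out, hn.out] using hle
  exact ⟨σ, hσ0, rfl⟩

theorem weak_limits_vanish_J_general {X ι : Type*} [TopologicalSpace X] [HasOuterApproxClosed X]
    [MeasurableSpace X] [BorelSpace X] [MeasurableSpace (ProbabilityMeasure X)]
    [OpensMeasurableSpace (ProbabilityMeasure X)] {l : Filter ι} {s : ι → ℝ}
    (hs : Tendsto s l (𝓝[>] 0)) {ν : ι → ProbabilityMeasure (ProbabilityMeasure X)}
    {μ : ι → ProbabilityMeasure X}
    (hμ : ∀ i, (μ i : Measure X) = (ν i : Measure _).bind ProbabilityMeasure.toMeasure)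
    {J : ProbabilityMeasure X → ℝ≥0∞} (hJlsc : LowerSemicontinuous J)
    (hJconv : Convex ℝ≥0 (((↑) : ProbabilityMeasure X → Measure X) '' {m | J m = 0}))
    {a : ℝ≥0∞} (ha : 0 < a) (hJcpt : IsCompact {m | J m ≤ a})
    (hub : ∀ U : Set (ProbabilityMeasure X), IsOpen U → {m | J m = 0} ⊆ U →
      limsup (fun i => (s i : EReal) * ENNReal.log ((ν i : Measure _) Uᶜ)) l
        ≤ -((⨅ m ∈ Uᶜ, J m : ℝ≥0∞) : EReal))
    {p : ProbabilityMeasure X} (hp : MapClusterPt p l μ) : J p = 0 := by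
  have hJcl : IsClosed {m | J m = 0} := by
    simpa only [Set.preimage, Set.mem_Iic, nonpos_iff_eq_zero] using hJlsc.isClosed_preimage 0
  refine mem_of_mapClusterPt_of_tendsto_measure_compl hJcl hJconv hμ (fun U hU hKU => ?_) hp
  have hinf : 0 < ⨅ m ∈ Uᶜ, J m :=
    lt_biInf_of_isCompact_sublevel hJlsc hU.isClosed_compl ha hJcpt
      fun m hm => pos_iff_ne_zero.2 fun hm0 => hm (hKU hm0)
  refine tendsto_zero_of_limsup_mul_log_neg hs ((hub U hU hKU).trans_lt ?_)
  simpa using hinf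

end LargeDeviations

/-- Let `X` be a compact metric space, `β t` Borel probability measures on
`X` and `δ t : X → 𝒫(X)` measurable maps. Suppose `J : 𝒫(X) → [0,∞]` is a lower
semicontinuous convex functional with nonempty zero set such that for every open
neighborhood `U` of `{J = 0}` one has the large deviations upper bound
`limsup (1/t) log (ν t Uᶜ) ≤ - inf {J m : m ∈ Uᶜ}`, where `ν t := β t ∘ (δ t)⁻¹`.
Then every weak limit `μ` of the expectations `μ t := ∫ δ t x dβ t (x)` as `t → ∞`
satisfies `J μ = 0`. -/
theorem weak_limits_vanish_J
    {X : Type*} [MetricSpace X] [CompactSpace X] [MeasurableSpace X] [BorelSpace X]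
    [MeasurableSpace (ProbabilityMeasure X)] [BorelSpace (ProbabilityMeasure X)]
    (β : ℝ → ProbabilityMeasure X)
    (δ : ℝ → X → ProbabilityMeasure X)
    (hδ : ∀ t : ℝ, 0 ≤ t → Measurable (δ t))
    (μ : ℝ → ProbabilityMeasure X)
    (hμ : ∀ t : ℝ, 0 ≤ t →
      (μ t : Measure X) = (β t : Measure X).bind (fun x => (δ t x : Measure X)))
    (J : ProbabilityMeasure X → ℝ≥0∞)
    (hJlsc : LowerSemicontinuous J)
    (hJconv : ConvexPMFunctional J)
    (hJne : {m : ProbabilityMeasure X | J m = 0}.Nonempty)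
    (hub : ∀ U : Set (ProbabilityMeasure X), IsOpen U →
      {m : ProbabilityMeasure X | J m = 0} ⊆ U →
      Filter.limsup (fun t : ℝ =>
          ((1 / t : ℝ) : EReal) * ENNReal.log (((β t : Measure X).map (δ t)) Uᶜ)) atTop
        ≤ -((⨅ m ∈ Uᶜ, J m : ℝ≥0∞) : EReal))
    (tn : ℕ → ℝ) (htn0 : ∀ n, 0 ≤ tn n) (htn : Tendsto tn atTop atTop)
    (μlim : ProbabilityMeasure X)
    (hlim : Tendsto (fun n => μ (tn n)) atTop (𝓝 μlim)) :
    J μlim = 0 := by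
  let ν (n : ℕ) : ProbabilityMeasure (ProbabilityMeasure X) :=
    (β (tn n)).map (hδ _ (htn0 n)).aemeasurable
  have hbary (n : ℕ) :
      (μ (tn n) : Measure X) = (ν n : Measure _).bind ProbabilityMeasure.toMeasure :=
    (hμ _ (htn0 n)).trans
      (bind_comp_eq_bind_map _ (hδ _ (htn0 n)) measurable_toMeasure_of_opensMeasurableSpace)
  have hspeed : Tendsto (fun n => 1 / tn n) atTop (𝓝[>] 0) := by
    simpa only [one_div, Function.comp_def] using tendsto_inv_atTop_nhdsGT_zero.comp htn
  refine weak_limits_vanish_J_general hspeed hbary hJlsc hJconv.convex_image_setOf_eq_zero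
    one_pos (hJlsc.isClosed_preimage 1).isCompact (fun U hU hJU => ?_) hlim.mapClusterPt
  exact htn.limsup_comp_le_limsup.trans (hub U hU hJU)
end

section
/- Let X be a compact metric space and Q : C(X, ℝ) → ℝ a convex continuous functional with Q(0) = 0 which is monotone (ω ≤ ω′ pointwise implies Q(ω) ≤ Q(ω′)) and satisfies Q(ω + c·1) = Q(ω) + c for every ω ∈ C(X, ℝ) and every constant c ∈ ℝ. Define J(μ) := sup_{ω ∈ C(X,ℝ)} ( ∫ ω dμ − Q(ω) ) for μ ∈ 𝒫(X). Then for every ω ∈ C(X, ℝ) one has the duality Q(ω) = sup_{μ ∈ 𝒫(X)} ( ∫ ω dμ − J(μ) ). -/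
open MeasureTheory Filter Topology ENNReal NNReal

/-- The Legendre-type functional `J(μ) = sup_ω (∫ ω dμ - Q ω)` associated with a
functional `Q` on continuous functions. -/
noncomputable def legendreJ {X : Type*} [MetricSpace X] [MeasurableSpace X]
    (Q : C(X, ℝ) → ℝ) (μ : ProbabilityMeasure X) : EReal :=
  ⨆ ω : C(X, ℝ), (((∫ x, ω x ∂(μ : Measure X)) - Q ω : ℝ) : EReal)

/-!
Monotonicity and translation equivariance make `Q` continuous, so by Hahn–Banach it is the upper
envelope of its continuous affine minorants `l + c ≤ Q`. Monotonicity of `Q` forces `l ≥ 0` and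
translation equivariance forces `l 1 = 1`, since an affine function bounded above on a half-line or
a line has nonpositive or zero slope along it. By Riesz–Markov–Kakutani `l` is then integration
against a probability measure `μ`, and the minorant property reads `J μ ≤ -c`.
-/

section Conjugate

variable {E : Type*} {Q φ : E → ℝ}

/-- The Legendre–Fenchel conjugate of `Q`, evaluated at `φ`. The function `φ` plays the role of a
linear functional, but `E` carries no structure here: linearity is irrelevant for the inequalities
relating `Q` to its conjugate. -/
noncomputable def fenchelConjugate (Q φ : E → ℝ) : EReal :=
  ⨆ y, ((φ y - Q y : ℝ) : EReal)

theorem sub_fenchelConjugate_le (Q φ : E → ℝ) (x : E) :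
    (φ x : EReal) - fenchelConjugate Q φ ≤ Q x :=
  calc (φ x : EReal) - fenchelConjugate Q φ
      ≤ φ x - ((φ x - Q x : ℝ) : EReal) :=
        EReal.sub_le_sub le_rfl (le_iSup (fun y => ((φ y - Q y : ℝ) : EReal)) x)
    _ = Q x := by rw [← EReal.coe_sub, _root_.sub_sub_cancel]

theorem add_le_sub_fenchelConjugate {c : ℝ} (h : ∀ y, φ y + c ≤ Q y) (x : E) :
    ((φ x + c : ℝ) : EReal) ≤ φ x - fenchelConjugate Q φ := by
  have conjugate_le : fenchelConjugate Q φ ≤ ((-c : ℝ) : EReal) :=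
    iSup_le fun y => EReal.coe_le_coe_iff.2 (by linarith [h y])
  calc ((φ x + c : ℝ) : EReal)
      = φ x - ((-c : ℝ) : EReal) := by rw [← EReal.coe_sub, sub_neg_eq_add]
    _ ≤ φ x - fenchelConjugate Q φ := EReal.sub_le_sub le_rfl conjugate_le

end Conjugate

section AffineMinorant

theorem nonneg_of_add_const_le_of_monotone {E : Type*} [AddCommGroup E] [Preorder E]
    [IsOrderedAddMonoid E] {Q : E → ℝ} (hQ : Monotone Q) {l : E →+ ℝ} {c : ℝ}
    (h : ∀ y, l y + c ≤ Q y) {x : E} (hx : 0 ≤ x) : 0 ≤ l x := by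
  by_contra! hneg
  obtain ⟨n, hn⟩ := exists_lt_nsmul (neg_pos.2 hneg) (Q 0 - c)
  have hle : l (-(n • x)) + c ≤ Q 0 :=
    (h _).trans (hQ (neg_nonpos.2 (nsmul_nonneg hx n)))
  rw [map_neg, map_nsmul, ← smul_neg] at hle
  linarith

theorem apply_eq_one_of_add_const_le {E : Type*} [AddCommGroup E] [Module ℝ E] {Q : E → ℝ} {e : E}
    (hQ : ∀ t : ℝ, Q (t • e) = Q 0 + t) {l : E →ₗ[ℝ] ℝ} {c : ℝ} (h : ∀ y, l y + c ≤ Q y) :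
    l e = 1 := by
  by_contra hne
  have hslope : l e - 1 ≠ 0 := sub_ne_zero.2 hne
  have hle (t : ℝ) : t * (l e - 1) ≤ Q 0 - c := by
    have := h (t • e)
    rw [map_smul, smul_eq_mul, hQ] at this
    linarith
  have := hle ((Q 0 - c + 1) / (l e - 1))
  rw [div_mul_cancel₀ _ hslope] at this
  linarith

end AffineMinorant

section CompactSpace

variable {X : Type*} [TopologicalSpace X] [CompactSpace X]

theorem lipschitzWith_one_of_monotone_of_map_add_const {Q : C(X, ℝ) → ℝ} (hmono : Monotone Q)
    (hconst : ∀ (ω : C(X, ℝ)) (c : ℝ), Q (ω + ContinuousMap.const X c) = Q ω + c) :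
    LipschitzWith 1 Q := by
  refine LipschitzWith.of_le_add fun ω η => ?_
  have hle : ω ≤ η + ContinuousMap.const X (dist ω η) := fun x => by
    have := (le_abs_self (ω x - η x)).trans (ContinuousMap.dist_apply_le_dist (f := ω) (g := η) x)
    exact sub_le_iff_le_add'.1 this
  exact (hmono hle).trans_eq (hconst η _)

variable [T2Space X] [MeasurableSpace X] [BorelSpace X]

theorem exists_probabilityMeasure_integral_eq (Λ : C(X, ℝ) →ₚ[ℝ] ℝ) (hΛ : Λ 1 = 1) :
    ∃ μ : ProbabilityMeasure X, ∀ η : C(X, ℝ), ∫ x, η x ∂(μ : Measure X) = Λ η := by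
  let Λc : CompactlySupportedContinuousMap X ℝ →ₚ[ℝ] ℝ :=
    { toFun := fun f => Λ f.toContinuousMap
      map_add' := fun f g => map_add Λ f.toContinuousMap g.toContinuousMap
      map_smul' := fun a f => map_smul Λ a f.toContinuousMap
      monotone' := fun _ _ hfg => OrderHomClass.mono Λ hfg }
  have integral_eq (η : C(X, ℝ)) : ∫ x, η x ∂(RealRMK.rieszMeasure Λc) = Λ η :=
    RealRMK.integral_rieszMeasure Λc (CompactlySupportedContinuousMap.continuousMapEquiv η)
  have measureReal_univ : (RealRMK.rieszMeasure Λc).real Set.univ = 1 := by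
    simpa [hΛ] using integral_eq 1
  exact ⟨⟨RealRMK.rieszMeasure Λc, ⟨(ENNReal.toReal_eq_one_iff _).1 measureReal_univ⟩⟩, integral_eq⟩

theorem exists_probabilityMeasure_integral_add_const_le {Q : C(X, ℝ) → ℝ}
    (hconv : ConvexOn ℝ Set.univ Q) (hmono : Monotone Q)
    (hconst : ∀ (ω : C(X, ℝ)) (c : ℝ), Q (ω + ContinuousMap.const X c) = Q ω + c)
    {ω : C(X, ℝ)} {a : ℝ} (ha : a < Q ω) :
    ∃ (μ : ProbabilityMeasure X) (c : ℝ),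
      (∀ η : C(X, ℝ), ∫ x, η x ∂(μ : Measure X) + c ≤ Q η) ∧
        ∫ x, ω x ∂(μ : Measure X) + c = a := by
  have hcont : Continuous Q :=
    (lipschitzWith_one_of_monotone_of_map_add_const hmono hconst).continuous
  obtain ⟨l, c, hle, heq⟩ := hconv.exists_affine_le_of_lt (𝕜 := ℝ) (Set.mem_univ ω) ha
    isClosed_univ (hcont.lowerSemicontinuous.lowerSemicontinuousOn _)
  have minorant (η : C(X, ℝ)) : l η + c ≤ Q η := hle ⟨η, Set.mem_univ η⟩
  have l_nonneg (η : C(X, ℝ)) (hη : 0 ≤ η) : 0 ≤ l η :=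
    nonneg_of_add_const_le_of_monotone hmono (l := (l : C(X, ℝ) →+ ℝ)) minorant hη
  have map_smul_one (t : ℝ) : Q (t • 1) = Q 0 + t := by
    rw [← hconst, zero_add]
    congr 1
    ext x
    simp
  have l_one : l 1 = 1 :=
    apply_eq_one_of_add_const_le map_smul_one (l := (l : C(X, ℝ) →ₗ[ℝ] ℝ)) minorant
  obtain ⟨μ, hμ⟩ := exists_probabilityMeasure_integral_eq
    (PositiveLinearMap.mk₀ (l : C(X, ℝ) →ₗ[ℝ] ℝ) l_nonneg) l_one
  exact ⟨μ, c, fun η => (hμ η).symm ▸ minorant η, (hμ ω).symm ▸ heq⟩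

theorem legendre_duality_general {Q : C(X, ℝ) → ℝ} (hconv : ConvexOn ℝ Set.univ Q)
    (hmono : Monotone Q)
    (hconst : ∀ (ω : C(X, ℝ)) (c : ℝ), Q (ω + ContinuousMap.const X c) = Q ω + c)
    (ω : C(X, ℝ)) :
    (Q ω : EReal) =
      ⨆ μ : ProbabilityMeasure X, (((∫ x, ω x ∂(μ : Measure X)) : ℝ) : EReal) -
        fenchelConjugate Q fun η => ∫ x, η x ∂(μ : Measure X) := by
  refine le_antisymm (EReal.ge_of_forall_gt_iff_ge.1 fun a ha => ?_)
    (iSup_le fun μ => sub_fenchelConjugate_le Q (fun η => ∫ x, η x ∂(μ : Measure X)) ω)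
  obtain ⟨μ, c, minorant, rfl⟩ :=
    exists_probabilityMeasure_integral_add_const_le hconv hmono hconst (EReal.coe_lt_coe_iff.1 ha)
  exact le_iSup_of_le μ (add_le_sub_fenchelConjugate minorant ω)

end CompactSpace

/-- Let `X` be a compact metric space and `Q : C(X,ℝ) → ℝ` a convex,
continuous functional with `Q 0 = 0`, which is monotone and additively homogeneous with
respect to constants (`Q (ω + c•1) = Q ω + c`). With
`J(μ) := sup_ω (∫ ω dμ - Q ω)`, one has the duality
`Q ω = sup_μ (∫ ω dμ - J μ)` for every `ω ∈ C(X,ℝ)`. -/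
theorem legendre_duality
    {X : Type*} [MetricSpace X] [CompactSpace X] [Nonempty X]
    [MeasurableSpace X] [BorelSpace X]
    (Q : C(X, ℝ) → ℝ) (hQconv : ConvexOn ℝ Set.univ Q) (hQcont : Continuous Q)
    (hQ0 : Q 0 = 0)
    (hQmono : ∀ ω ω' : C(X, ℝ), (∀ x, ω x ≤ ω' x) → Q ω ≤ Q ω')
    (hQconst : ∀ (ω : C(X, ℝ)) (c : ℝ), Q (ω + ContinuousMap.const X c) = Q ω + c)
    (ω : C(X, ℝ)) :
    (Q ω : EReal) =
      ⨆ μ : ProbabilityMeasure X,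
        (((∫ x, ω x ∂(μ : Measure X)) : ℝ) : EReal) - legendreJ Q μ :=
  legendre_duality_general hQconv (fun η η' h => hQmono η η' h) hQconst ω
end

section
/- Let X be a compact metric space and φ : ℝ × X → X a continuous flow, and let P denote the topological pressure of the flow. Then for all f, ω ∈ C(X, ℝ) and every t₀ ∈ ℝ one has P(f + ω ∘ φ^{t₀}) = P(f + ω). In particular the functional Q_f(ω) := P(f + ω) − P(f) (when P(f) is finite) satisfies Q_f(ω ∘ φ^{t₀}) = Q_f(ω). -/
/-!
The orbit integrals of `ω ∘ φ^{t₀}` and of `ω` over `[0, t]` differ only by integrals of `ω` along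
two orbit segments of length `|t₀|`, so their difference is bounded uniformly in `t` and in the
orbit. Changing all orbit integrals by `o(t)` changes the logarithm of the partition function by
`o(t)`, which disappears in the limit defining the pressure.
-/

open MeasureTheory Filter Topology ENNReal NNReal

/-- `E` is a `(t, ε)`-separated set for the flow `φ`: distinct points of `E` are moved at
distance `> ε` apart at some time `s ∈ [0, t]`. -/
def IsSeparatedSet {X : Type*} [MetricSpace X] (φ : ℝ → C(X, X)) (t ε : ℝ) (E : Set X) : Prop :=
  ∀ x ∈ E, ∀ y ∈ E, x ≠ y → ∃ s ∈ Set.Icc (0 : ℝ) t, ε < dist (φ s x) (φ s y)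

/-- The topological pressure of a continuous function `f` for the flow `φ`, with values in
`[-∞, ∞]`. -/
noncomputable def pressure {X : Type*} [MetricSpace X] (φ : ℝ → C(X, X)) (f : C(X, ℝ)) : EReal :=
  ⨆ (ε : ℝ) (_ : 0 < ε),
    Filter.limsup (fun t : ℝ =>
      ((1 / t : ℝ) : EReal) *
        ENNReal.log (⨆ (E : Finset X) (_ : IsSeparatedSet φ t ε (E : Set X)),
          ENNReal.ofReal (∑ x ∈ E, Real.exp (∫ s in (0 : ℝ)..t, f (φ s x))))) Filter.atTop

/-- The orbit integral `∫₀ᵗ f (φˢ x) ds`, the continuous-time analogue of the Birkhoff sum of `f`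
along the orbit of `x`. -/
noncomputable def orbitIntegral {X : Type*} [TopologicalSpace X] (φ : ℝ → C(X, X)) (f : C(X, ℝ))
    (t : ℝ) (x : X) : ℝ :=
  ∫ s in (0 : ℝ)..t, f (φ s x)

/-- The partition function of `f`: the supremum of `∑ x ∈ E, exp (∫₀ᵗ f (φˢ x) ds)` over the finite
`(t, ε)`-separated sets `E`. It takes values in `[0, ∞]` so that the supremum always exists. -/
noncomputable def partitionFunction {X : Type*} [MetricSpace X] (φ : ℝ → C(X, X)) (f : C(X, ℝ))
    (t ε : ℝ) : ℝ≥0∞ :=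
  ⨆ (E : Finset X) (_ : IsSeparatedSet φ t ε (E : Set X)),
    ENNReal.ofReal (∑ x ∈ E, Real.exp (orbitIntegral φ f t x))

theorem limsup_le_limsup_of_le_add_of_tendsto_zero {ι : Type*} {l : Filter ι} [l.NeBot]
    {a u v : ι → EReal} (ha : Tendsto a l (𝓝 0)) (huv : ∀ᶠ i in l, u i ≤ a i + v i) :
    limsup u l ≤ limsup v l := by
  have ha_limsup : limsup a l = 0 := ha.limsup_eq
  calc
    limsup u l ≤ limsup (a + v) l := limsup_le_limsup huv
    _ ≤ limsup a l + limsup v l :=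
      EReal.limsup_add_le (by simp [ha_limsup]) (by simp [ha_limsup])
    _ = limsup v l := by rw [ha_limsup, zero_add]

theorem norm_integral_comp_add_right_sub_integral_le {E : Type*} [NormedAddCommGroup E]
    [NormedSpace ℝ E] {g : ℝ → E} {M : ℝ} (hg : ∀ a b, IntervalIntegrable g volume a b)
    (hM : ∀ s, ‖g s‖ ≤ M) (a b c : ℝ) :
    ‖(∫ s in a..b, g (s + c)) - ∫ s in a..b, g s‖ ≤ 2 * (M * |c|) := by
  have norm_le (p q : ℝ) : ‖∫ s in p..q, g s‖ ≤ M * |q - p| :=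
    intervalIntegral.norm_integral_le_of_norm_le_const fun s _ ↦ hM s
  calc
    ‖(∫ s in a..b, g (s + c)) - ∫ s in a..b, g s‖
        = ‖(∫ s in b..b + c, g s) - ∫ s in a..a + c, g s‖ := by
      rw [intervalIntegral.integral_comp_add_right,
        intervalIntegral.integral_interval_sub_interval_comm' (hg _ _) (hg _ _) (hg _ _)]
    _ ≤ ‖∫ s in b..b + c, g s‖ + ‖∫ s in a..a + c, g s‖ := norm_sub_le _ _
    _ ≤ M * |b + c - b| + M * |a + c - a| := add_le_add (norm_le _ _) (norm_le _ _)
    _ = 2 * (M * |c|) := by simp only [add_sub_cancel_left]; ring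

section OrbitIntegral

variable {X : Type*} [TopologicalSpace X] {φ : ℝ → C(X, X)}

theorem intervalIntegrable_comp_orbit (hφ : ∀ x, Continuous fun s ↦ φ s x) (f : C(X, ℝ)) (x : X)
    (a b : ℝ) : IntervalIntegrable (fun s ↦ f (φ s x)) volume a b :=
  (f.continuous.comp (hφ x)).intervalIntegrable a b

theorem orbitIntegral_add (hφ : ∀ x, Continuous fun s ↦ φ s x) (f g : C(X, ℝ)) (t : ℝ) (x : X) :
    orbitIntegral φ (f + g) t x = orbitIntegral φ f t x + orbitIntegral φ g t x :=
  intervalIntegral.integral_add (intervalIntegrable_comp_orbit hφ f x 0 t)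
    (intervalIntegrable_comp_orbit hφ g x 0 t)

theorem orbitIntegral_comp (hφadd : ∀ s t : ℝ, φ (s + t) = (φ s).comp (φ t)) (f : C(X, ℝ))
    (t₀ t : ℝ) (x : X) :
    orbitIntegral φ (f.comp (φ t₀)) t x = ∫ s in (0 : ℝ)..t, f (φ (s + t₀) x) := by
  simp only [orbitIntegral, add_comm _ t₀, hφadd, ContinuousMap.comp_apply]

theorem abs_orbitIntegral_comp_sub_le (hφ : ∀ x, Continuous fun s ↦ φ s x)
    (hφadd : ∀ s t : ℝ, φ (s + t) = (φ s).comp (φ t)) {f : C(X, ℝ)} {M : ℝ}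
    (hM : ∀ x, |f x| ≤ M) (t₀ t : ℝ) (x : X) :
    |orbitIntegral φ (f.comp (φ t₀)) t x - orbitIntegral φ f t x| ≤ 2 * (M * |t₀|) := by
  rw [orbitIntegral_comp hφadd]
  exact norm_integral_comp_add_right_sub_integral_le (intervalIntegrable_comp_orbit hφ f x)
    (fun s ↦ hM (φ s x)) 0 t t₀

end OrbitIntegral

section Pressure

variable {X : Type*} [MetricSpace X] {φ : ℝ → C(X, X)}

theorem pressure_eq_iSup_limsup_log_partitionFunction (φ : ℝ → C(X, X)) (f : C(X, ℝ)) :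
    pressure φ f = ⨆ (ε : ℝ) (_ : 0 < ε),
      limsup (fun t : ℝ ↦ ((1 / t : ℝ) : EReal) * ENNReal.log (partitionFunction φ f t ε)) atTop :=
  rfl

theorem partitionFunction_le_exp_mul {f g : C(X, ℝ)} {t C : ℝ}
    (h : ∀ x, orbitIntegral φ f t x ≤ C + orbitIntegral φ g t x) (ε : ℝ) :
    partitionFunction φ f t ε ≤ ENNReal.ofReal (Real.exp C) * partitionFunction φ g t ε := by
  refine iSup₂_le fun E hE ↦ ?_
  have sum_le : ∑ x ∈ E, Real.exp (orbitIntegral φ f t x) ≤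
      Real.exp C * ∑ x ∈ E, Real.exp (orbitIntegral φ g t x) := by
    simp only [Finset.mul_sum, ← Real.exp_add]
    exact Finset.sum_le_sum fun x _ ↦ Real.exp_le_exp.2 (h x)
  calc
    ENNReal.ofReal (∑ x ∈ E, Real.exp (orbitIntegral φ f t x))
        ≤ ENNReal.ofReal (Real.exp C * ∑ x ∈ E, Real.exp (orbitIntegral φ g t x)) :=
      ENNReal.ofReal_le_ofReal sum_le
    _ = ENNReal.ofReal (Real.exp C) *
          ENNReal.ofReal (∑ x ∈ E, Real.exp (orbitIntegral φ g t x)) :=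
      ENNReal.ofReal_mul (Real.exp_pos C).le
    _ ≤ ENNReal.ofReal (Real.exp C) * partitionFunction φ g t ε := by
      gcongr
      exact le_iSup₂_of_le E hE le_rfl

theorem log_partitionFunction_le_add {f g : C(X, ℝ)} {t C : ℝ}
    (h : ∀ x, orbitIntegral φ f t x ≤ C + orbitIntegral φ g t x) (ε : ℝ) :
    ENNReal.log (partitionFunction φ f t ε) ≤ C + ENNReal.log (partitionFunction φ g t ε) := by
  calc
    ENNReal.log (partitionFunction φ f t ε)
        ≤ ENNReal.log (ENNReal.ofReal (Real.exp C) * partitionFunction φ g t ε) :=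
      ENNReal.log_monotone (partitionFunction_le_exp_mul h ε)
    _ = C + ENNReal.log (partitionFunction φ g t ε) := by
      rw [ENNReal.log_mul_add, ENNReal.log_ofReal_of_pos (Real.exp_pos C), Real.log_exp]

theorem pressure_le_of_orbitIntegral_le_add {f g : C(X, ℝ)} {C : ℝ → ℝ} (hC : C =o[atTop] id)
    (h : ∀ᶠ t in atTop, ∀ x, orbitIntegral φ f t x ≤ C t + orbitIntegral φ g t x) :
    pressure φ f ≤ pressure φ g := by
  simp only [pressure_eq_iSup_limsup_log_partitionFunction]
  refine iSup₂_mono fun ε _ ↦ ?_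
  have error_tendsto : Tendsto (fun t ↦ ((1 / t * C t : ℝ) : EReal)) atTop (𝓝 0) := by
    have : Tendsto (fun t ↦ 1 / t * C t) atTop (𝓝 0) := by
      simpa only [one_div_mul_eq_div, id_eq] using hC.tendsto_div_nhds_zero
    exact (continuous_coe_real_ereal.tendsto 0).comp this
  refine limsup_le_limsup_of_le_add_of_tendsto_zero error_tendsto ?_
  filter_upwards [h, eventually_gt_atTop 0] with t horbit ht
  have inv_nonneg : (0 : EReal) ≤ ((1 / t : ℝ) : EReal) := by exact_mod_cast (one_div_pos.2 ht).le
  calc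
    ((1 / t : ℝ) : EReal) * ENNReal.log (partitionFunction φ f t ε)
        ≤ ((1 / t : ℝ) : EReal) * (C t + ENNReal.log (partitionFunction φ g t ε)) :=
      mul_le_mul_of_nonneg_left (log_partitionFunction_le_add horbit ε) inv_nonneg
    _ = ((1 / t * C t : ℝ) : EReal) +
          ((1 / t : ℝ) : EReal) * ENNReal.log (partitionFunction φ g t ε) := by
      rw [EReal.left_distrib_of_nonneg_of_ne_top inv_nonneg (EReal.coe_ne_top _), EReal.coe_mul]

theorem pressure_eq_of_abs_orbitIntegral_sub_le {f g : C(X, ℝ)} {C : ℝ → ℝ} (hC : C =o[atTop] id)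
    (h : ∀ᶠ t in atTop, ∀ x, |orbitIntegral φ f t x - orbitIntegral φ g t x| ≤ C t) :
    pressure φ f = pressure φ g := by
  apply le_antisymm <;> refine pressure_le_of_orbitIntegral_le_add hC ?_ <;>
    filter_upwards [h] with t ht x
  · linarith [(abs_le.1 (ht x)).2]
  · linarith [(abs_le.1 (ht x)).1]

theorem pressure_flow_invariant_general (hφ : ∀ x, Continuous fun s ↦ φ s x)
    (hφadd : ∀ s t : ℝ, φ (s + t) = (φ s).comp (φ t)) (f : C(X, ℝ)) {ω : C(X, ℝ)} {M : ℝ}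
    (hM : ∀ x, |ω x| ≤ M) (t₀ : ℝ) :
    pressure φ (f + ω.comp (φ t₀)) = pressure φ (f + ω) := by
  have const_isLittleO : (fun _ : ℝ ↦ 2 * (M * |t₀|)) =o[atTop] id :=
    Asymptotics.isLittleO_const_id_atTop _
  refine pressure_eq_of_abs_orbitIntegral_sub_le const_isLittleO (.of_forall fun t x ↦ ?_)
  rw [orbitIntegral_add hφ, orbitIntegral_add hφ, add_sub_add_left_eq_sub]
  exact abs_orbitIntegral_comp_sub_le hφ hφadd hM t₀ t x

end Pressure

/-- For a continuous flow `φ` on a compact metric space, the topological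
pressure satisfies `P(f + ω ∘ φ^{t₀}) = P(f + ω)` for all `f, ω ∈ C(X,ℝ)` and `t₀ ∈ ℝ`;
in particular `Q_f(ω) := P(f + ω) - P(f)` satisfies `Q_f(ω ∘ φ^{t₀}) = Q_f(ω)`. -/
theorem pressure_flow_invariant
    {X : Type*} [MetricSpace X] [CompactSpace X]
    (φ : ℝ → C(X, X))
    (hφcont : Continuous fun p : ℝ × X => φ p.1 p.2)
    (hφ0 : φ 0 = ContinuousMap.id X)
    (hφadd : ∀ s t : ℝ, φ (s + t) = (φ s).comp (φ t))
    (f ω : C(X, ℝ)) (t₀ : ℝ) :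
    pressure φ (f + ω.comp (φ t₀)) = pressure φ (f + ω) ∧
    (∀ p : ℝ, pressure φ f = (p : EReal) →
      pressure φ (f + ω.comp (φ t₀)) - pressure φ f = pressure φ (f + ω) - pressure φ f) := by
  have key := pressure_flow_invariant_general (fun x ↦ hφcont.comp (.prodMk_left x)) hφadd f
    ω.norm_coe_le_norm t₀
  exact ⟨key, fun _ _ ↦ by rw [key]⟩
end
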